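/- arXiv:1404.7098 — 2 statements merged into one kernel-verified Lean document; each statement's English description precedes it below -/
import Mathlib

section
/- Let R > 0, let k ∈ {0, −1, −2}, and let Z₁, Z₂ be 2×2 complex matrices with R²·1 − ZᵢZᵢ* positive definite for i=1,2. Then (i/2π³) ∫_{U(2)_R} (det W)^k / ( det(W−Z₁) · det(W−Z₂) ) dV equals 1 if k = 0, and equals 0 if k = −1 or k = −2, where the integral over U(2)_R is the explicit parametrized iterated integral described below. -/
noncomputable section

open scoped ComplexOrder

/-- The parametrization of `U(2)_R`:
`W(α,φ,θ,ψ) = Re^{iα}·[[e^{i(φ+ψ)/2}cos(θ/2), i e^{i(φ−ψ)/2}sin(θ/2)],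
[i e^{i(ψ−φ)/2}sin(θ/2), e^{−i(φ+ψ)/2}cos(θ/2)]]`. -/
def Wparam (R α φ θ ψ : ℝ) : Matrix (Fin 2) (Fin 2) ℂ :=
  ((R : ℂ) * Complex.exp (Complex.I * α)) •
    !![Complex.exp (Complex.I * (φ + ψ) / 2) * (Real.cos (θ / 2) : ℂ),
         Complex.I * Complex.exp (Complex.I * (φ - ψ) / 2) * (Real.sin (θ / 2) : ℂ);
       Complex.I * Complex.exp (Complex.I * (ψ - φ) / 2) * (Real.sin (θ / 2) : ℂ),
         Complex.exp (-Complex.I * (φ + ψ) / 2) * (Real.cos (θ / 2) : ℂ)]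

/-- `∫_{U(2)_R} g dV`, defined as the iterated integral of
`g(W(α,φ,θ,ψ)) · (R⁴/(8i)) e^{4iα} sinθ` over
`(α,φ,θ,ψ) ∈ [0,π)×[0,2π)×(0,π)×[−2π,2π)`; with this orientation
`∫_{U(2)_R} dV/(det W)² = −2π³i`. -/
def U2int (R : ℝ) (g : Matrix (Fin 2) (Fin 2) ℂ → ℂ) : ℂ :=
  ∫ α in (0 : ℝ)..Real.pi, ∫ φ in (0 : ℝ)..(2 * Real.pi),
    ∫ θ in (0 : ℝ)..Real.pi, ∫ ψ in (-(2 * Real.pi))..(2 * Real.pi),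
      g (Wparam R α φ θ ψ) * ((R : ℂ) ^ 4 / (8 * Complex.I)) *
        Complex.exp (4 * Complex.I * α) * (Real.sin θ : ℂ)

def Umat (φ θ ψ : ℝ) : Matrix (Fin 2) (Fin 2) ℂ :=
    !![Complex.exp (Complex.I * (φ + ψ) / 2) * (Real.cos (θ / 2) : ℂ),
         Complex.I * Complex.exp (Complex.I * (φ - ψ) / 2) * (Real.sin (θ / 2) : ℂ);
       Complex.I * Complex.exp (Complex.I * (ψ - φ) / 2) * (Real.sin (θ / 2) : ℂ),
         Complex.exp (-Complex.I * (φ + ψ) / 2) * (Real.cos (θ / 2) : ℂ)]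

lemma Umat_exp1 (φ ψ : ℝ) : Complex.exp (Complex.I * (φ + ψ) / 2) * Complex.exp (-Complex.I * (φ + ψ) / 2) = 1 := by
  rw [← Complex.exp_add, Complex.exp_eq_one_iff]; exact ⟨0, by push_cast; ring⟩
lemma Umat_exp2 (φ ψ : ℝ) : Complex.exp (Complex.I * (φ - ψ) / 2) * Complex.exp (Complex.I * (ψ - φ) / 2) = 1 := by
  rw [← Complex.exp_add, Complex.exp_eq_one_iff]; exact ⟨0, by push_cast; ring⟩
lemma Umat_cs (θ : ℝ) : (Real.cos (θ / 2) : ℂ)^2 + (Real.sin (θ / 2) : ℂ)^2 = 1 := by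
  exact_mod_cast Real.cos_sq_add_sin_sq (θ/2)

lemma Umat_det (φ θ ψ : ℝ) : (Umat φ θ ψ).det = 1 := by
  rw [Umat, Matrix.det_fin_two_of]
  have h1 := Umat_exp1 φ ψ
  have h2 := Umat_exp2 φ ψ
  have h3 := Umat_cs θ
  have h4 := Complex.I_sq
  linear_combination (Real.cos (θ / 2) : ℂ)^2 * h1 - Complex.I^2 * (Real.sin (θ / 2) : ℂ)^2 * h2 + h3 - (Real.sin (θ / 2) : ℂ)^2 * h4

lemma Umat_unitary (φ θ ψ : ℝ) : Umat φ θ ψ * (Umat φ θ ψ).conjTranspose = 1 := by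
  have e1 : (starRingEnd ℂ) (Complex.exp (Complex.I * (φ + ψ) / 2)) = Complex.exp (-Complex.I * (φ + ψ) / 2) := by
    rw [← Complex.exp_conj]; congr 1; simp [map_div₀, Complex.conj_ofNat]
  have e2 : (starRingEnd ℂ) (Complex.exp (-Complex.I * (φ + ψ) / 2)) = Complex.exp (Complex.I * (φ + ψ) / 2) := by
    rw [← Complex.exp_conj]; congr 1; simp [map_div₀, Complex.conj_ofNat]
  have e3 : (starRingEnd ℂ) (Complex.exp (Complex.I * (φ - ψ) / 2)) = Complex.exp (Complex.I * (ψ - φ) / 2) := by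
    rw [← Complex.exp_conj]; congr 1; simp [map_div₀, Complex.conj_ofNat]; ring
  have e4 : (starRingEnd ℂ) (Complex.exp (Complex.I * (ψ - φ) / 2)) = Complex.exp (Complex.I * (φ - ψ) / 2) := by
    rw [← Complex.exp_conj]; congr 1; simp [map_div₀, Complex.conj_ofNat]; ring
  have h1 := Umat_exp1 φ ψ
  have h2 := Umat_exp2 φ ψ
  have h3 := Umat_cs θ
  have h4 := Complex.I_sq
  ext i j
  fin_cases i <;> fin_cases j <;>
    simp only [Umat, Matrix.mul_apply, Fin.sum_univ_two, Matrix.conjTranspose_apply, RCLike.star_def, Matrix.of_apply, Matrix.cons_val', Matrix.cons_val_zero, Matrix.cons_val_one, Matrix.cons_val_fin_one, Fin.zero_eta, Fin.mk_one, map_mul, e1, e2, e3, e4, Complex.conj_I, Complex.conj_ofReal, Matrix.one_apply_eq, Fin.isValue]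
  · linear_combination (Real.cos (θ / 2) : ℂ)^2 * h1 - Complex.I^2 * (Real.sin (θ / 2) : ℂ)^2 * h2 + h3 - (Real.sin (θ / 2) : ℂ)^2 * h4
  · rw [Matrix.one_apply_ne (by decide)]; ring
  · rw [Matrix.one_apply_ne (by decide)]; ring
  · linear_combination (Real.cos (θ / 2) : ℂ)^2 * h1 - Complex.I^2 * (Real.sin (θ / 2) : ℂ)^2 * h2 + h3 - (Real.sin (θ / 2) : ℂ)^2 * h4

open Matrix in
lemma det_ne (R : ℝ) (U Z : Matrix (Fin 2) (Fin 2) ℂ) (hU : U * U.conjTranspose = 1) 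
    (hZ : (((R ^ 2 : ℝ) : ℂ) • (1 : Matrix (Fin 2) (Fin 2) ℂ)
             - Z * Z.conjTranspose).PosDef) (w : ℂ) (hw : ‖w‖ ≤ 1) :
    ((R : ℂ) • U - w • Z).det ≠ 0 := by
  intro h
  obtain ⟨v, hv, h0⟩ := Matrix.exists_vecMul_eq_zero_iff.mpr h
  have hp := hZ.dotProduct_mulVec_pos (x := star v) (by simpa using hv)
  rw [star_star, dotProduct_mulVec, vecMul_sub, sub_dotProduct, vecMul_smul, vecMul_one,
    ← vecMul_vecMul, ← dotProduct_mulVec, ← star_vecMul, smul_dotProduct, smul_eq_mul] at hp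
  rw [vecMul_sub, vecMul_smul, vecMul_smul, sub_eq_zero] at h0
  have h1 : ((R:ℂ) • v ᵥ* U) ⬝ᵥ star ((R:ℂ) • v ᵥ* U) = ((R ^ 2 : ℝ) : ℂ) * (v ⬝ᵥ star v) := by
    rw [star_smul, star_vecMul, smul_dotProduct, dotProduct_smul, dotProduct_mulVec, vecMul_vecMul, hU, vecMul_one]
    simp; ring
  rw [h0] at h1
  set a := v ᵥ* Z
  have ha : 0 ≤ a ⬝ᵥ star a := by
    rw [dotProduct_comm]; exact dotProduct_star_self_nonneg a
  have h2 : (w • a) ⬝ᵥ star (w • a) = ((‖w‖^2 : ℝ) : ℂ) * (a ⬝ᵥ star a) := by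
    rw [star_smul, smul_dotProduct, dotProduct_smul, smul_eq_mul, smul_eq_mul, ← mul_assoc]
    congr 1
    simpa using Complex.mul_conj' w
  rw [← h1, h2] at hp
  have h3 : (((‖w‖^2 : ℝ) : ℂ) - 1) * (a ⬝ᵥ star a) ≤ 0 := by
    apply mul_nonpos_of_nonpos_of_nonneg _ ha
    rw [sub_nonpos]
    exact_mod_cast pow_le_one₀ (norm_nonneg w) hw
  rw [sub_mul, one_mul] at h3
  exact absurd hp (not_lt_of_ge h3)

lemma Umat_shift (φ θ ψ : ℝ) : Umat φ θ (ψ + 2 * Real.pi) = -Umat φ θ ψ := by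
  have hp : Complex.exp (Real.pi * Complex.I) = -1 := Complex.exp_pi_mul_I
  have hm : Complex.exp (-(Real.pi * Complex.I)) = -1 := by rw [Complex.exp_neg, hp]; norm_num
  have e1 : Complex.exp (Complex.I * (φ + (ψ + 2 * Real.pi : ℝ)) / 2) = -Complex.exp (Complex.I * (φ + ψ) / 2) := by
    rw [show Complex.I * (φ + (ψ + 2 * Real.pi : ℝ)) / 2 = Complex.I * (φ + ψ) / 2 + Real.pi * Complex.I by push_cast; ring, Complex.exp_add, hp]; ring
  have e2 : Complex.exp (-Complex.I * (φ + (ψ + 2 * Real.pi : ℝ)) / 2) = -Complex.exp (-Complex.I * (φ + ψ) / 2) := by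
    rw [show -Complex.I * (φ + (ψ + 2 * Real.pi : ℝ)) / 2 = -Complex.I * (φ + ψ) / 2 + -(Real.pi * Complex.I) by push_cast; ring, Complex.exp_add, hm]; ring
  have e3 : Complex.exp (Complex.I * (φ - (ψ + 2 * Real.pi : ℝ)) / 2) = -Complex.exp (Complex.I * (φ - ψ) / 2) := by
    rw [show Complex.I * (φ - (ψ + 2 * Real.pi : ℝ)) / 2 = Complex.I * (φ - ψ) / 2 + -(Real.pi * Complex.I) by push_cast; ring, Complex.exp_add, hm]; ring
  have e4 : Complex.exp (Complex.I * ((ψ + 2 * Real.pi : ℝ) - φ) / 2) = -Complex.exp (Complex.I * (ψ - φ) / 2) := by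
    rw [show Complex.I * ((ψ + 2 * Real.pi : ℝ) - φ) / 2 = Complex.I * (ψ - φ) / 2 + Real.pi * Complex.I by push_cast; ring, Complex.exp_add, hp]; ring
  rw [Umat, e1, e2, e3, e4, Umat]
  ext i j
  fin_cases i <;> fin_cases j <;> simp

/-- The integrand, as a function of `w = e^{-iα}`. -/
def Kfun (R : ℝ) (m : ℕ) (Z₁ Z₂ : Matrix (Fin 2) (Fin 2) ℂ) (w : ℂ) (φ θ ψ : ℝ) : ℂ :=
  w ^ (2 * m) / (((R : ℂ) • Umat φ θ ψ - w • Z₁).det * ((R : ℂ) • Umat φ θ ψ - w • Z₂).det)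
    * (Real.sin θ : ℂ)

lemma Kfun_shift (R : ℝ) (m : ℕ) (Z₁ Z₂ : Matrix (Fin 2) (Fin 2) ℂ) (w : ℂ) (φ θ ψ : ℝ) :
    Kfun R m Z₁ Z₂ w φ θ (ψ + 2 * Real.pi) = Kfun R m Z₁ Z₂ (-w) φ θ ψ := by
  have h (Z : Matrix (Fin 2) (Fin 2) ℂ) : ((R : ℂ) • (-Umat φ θ ψ) - w • Z).det
      = ((R : ℂ) • (Umat φ θ ψ) - (-w) • Z).det := by
    rw [← neg_neg ((R : ℂ) • (-Umat φ θ ψ) - w • Z), Matrix.det_neg]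
    simp; congr 1; abel
  rw [Kfun, Kfun, Umat_shift, h, h, pow_mul, pow_mul (-w), neg_sq]

lemma swap_cont (F : ℝ → ℝ → ℂ) (hF : Continuous F.uncurry) (a b c d : ℝ) :
    ∫ x in a..b, ∫ y in c..d, F x y = ∫ y in c..d, ∫ x in a..b, F x y := by
  apply MeasureTheory.intervalIntegral_intervalIntegral_swap
  apply (hF.continuousOn.integrableOn_compact (K := Set.uIcc a b ×ˢ Set.uIcc c d)
    (isCompact_uIcc.prod isCompact_uIcc)).mono_set
  exact Set.prod_mono Set.uIoc_subset_uIcc Set.uIoc_subset_uIcc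

lemma cont_par {X : Type*} [TopologicalSpace X] (F : X → ℝ → ℂ) (hF : Continuous F.uncurry) (a b : ℝ) :
    Continuous fun x => ∫ t in a..b, F x t :=
  intervalIntegral.continuous_parametric_intervalIntegral_of_continuous' hF a b

/-- The abstract averaging argument. -/
lemma avg (f : ℝ → ℝ → ℝ → ℝ → ℂ)
    (hf : Continuous fun p : ((ℝ × ℝ) × ℝ) × ℝ => f p.1.1.1 p.1.1.2 p.1.2 p.2)
    (hs : ∀ α φ θ ψ, f (α + Real.pi) φ θ ψ = f α φ θ (ψ + 2 * Real.pi))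
    (hper : ∀ α φ θ ψ, f α φ θ (ψ + 2 * Real.pi + 2 * Real.pi) = f α φ θ ψ)
    (c : ℝ → ℂ) (hc : ∀ φ θ ψ, ∫ α in (0:ℝ)..(2 * Real.pi), f α φ θ ψ = c θ) :
    ∫ α in (0 : ℝ)..Real.pi, ∫ φ in (0 : ℝ)..(2 * Real.pi),
      ∫ θ in (0 : ℝ)..Real.pi, ∫ ψ in (-(2 * Real.pi))..(2 * Real.pi), f α φ θ ψ
    = 4 * Real.pi ^ 2 * ∫ θ in (0 : ℝ)..Real.pi, c θ := by
  have c3 : Continuous fun p : (ℝ × ℝ) × ℝ =>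
      ∫ ψ in (-(2 * Real.pi))..(2 * Real.pi), f p.1.1 p.1.2 p.2 ψ := cont_par _ hf _ _
  have c2 : Continuous fun p : ℝ × ℝ => ∫ θ in (0 : ℝ)..Real.pi,
      ∫ ψ in (-(2 * Real.pi))..(2 * Real.pi), f p.1 p.2 θ ψ := cont_par _ c3 _ _
  have c1 : Continuous fun α : ℝ => ∫ φ in (0 : ℝ)..(2 * Real.pi), ∫ θ in (0 : ℝ)..Real.pi,
      ∫ ψ in (-(2 * Real.pi))..(2 * Real.pi), f α φ θ ψ := cont_par _ c2 _ _
  have hT : Function.Periodic (fun α : ℝ => ∫ φ in (0 : ℝ)..(2 * Real.pi), ∫ θ in (0 : ℝ)..Real.pi,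
      ∫ ψ in (-(2 * Real.pi))..(2 * Real.pi), f α φ θ ψ) Real.pi := by
    intro α
    simp only [hs]
    congr 1; ext φ; congr 1; ext θ
    have hP : Function.Periodic (fun ψ => f α φ θ ψ) (4 * Real.pi) := by
      intro ψ
      dsimp only
      rw [← hper α φ θ ψ]
      congr 1; ring
    have := hP.intervalIntegral_add_eq (-(2 * Real.pi) + 2 * Real.pi) (-(2 * Real.pi))
    rw [intervalIntegral.integral_comp_add_right (fun ψ => f α φ θ ψ)]
    convert this using 2 <;> ring
  have hd := hT.intervalIntegral_add_eq 0 Real.pi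
  have ha := intervalIntegral.integral_add_adjacent_intervals (μ := MeasureTheory.volume)
    (c1.intervalIntegrable 0 Real.pi) (c1.intervalIntegrable Real.pi (2 * Real.pi))
  rw [zero_add, ← two_mul] at hd
  rw [← hd, swap_cont (fun α φ => ∫ θ in (0 : ℝ)..Real.pi,
      ∫ ψ in (-(2 * Real.pi))..(2 * Real.pi), f α φ θ ψ) c2 0 (2 * Real.pi) 0 (2 * Real.pi)] at ha
  have hφ : ∀ φ, ∫ α in (0:ℝ)..(2 * Real.pi), ∫ θ in (0 : ℝ)..Real.pi,
      ∫ ψ in (-(2 * Real.pi))..(2 * Real.pi), f α φ θ ψ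
      = 4 * Real.pi * ∫ θ in (0 : ℝ)..Real.pi, c θ := by
    intro φ
    rw [swap_cont (fun α θ => ∫ ψ in (-(2 * Real.pi))..(2 * Real.pi), f α φ θ ψ)
      (c3.comp (f := fun p : ℝ × ℝ => ((p.1, φ), p.2)) (by fun_prop)),
      ← intervalIntegral.integral_const_mul]
    congr 1; ext θ
    rw [swap_cont (fun α ψ => f α φ θ ψ)
      (hf.comp (f := fun p : ℝ × ℝ => (((p.1, φ), θ), p.2)) (by fun_prop))]
    simp only [hc, intervalIntegral.integral_const, Complex.real_smul]
    push_cast; ring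
  simp only [hφ, intervalIntegral.integral_const, Complex.real_smul] at ha
  push_cast at ha
  linear_combination ha / 2

lemma Kfun_avg (R : ℝ) (hR : 0 < R) (m : ℕ) (Z₁ Z₂ : Matrix (Fin 2) (Fin 2) ℂ)
    (hZ₁ : (((R ^ 2 : ℝ) : ℂ) • (1 : Matrix (Fin 2) (Fin 2) ℂ)
             - Z₁ * Z₁.conjTranspose).PosDef)
    (hZ₂ : (((R ^ 2 : ℝ) : ℂ) • (1 : Matrix (Fin 2) (Fin 2) ℂ)
             - Z₂ * Z₂.conjTranspose).PosDef) (φ θ ψ : ℝ) :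
    ∫ α in (0:ℝ)..(2 * Real.pi), Kfun R m Z₁ Z₂ (Complex.exp (-(α * Complex.I))) φ θ ψ
      = 2 * Real.pi * ((if m = 0 then 1 / (R:ℂ) ^ 4 else 0) * (Real.sin θ : ℂ)) := by
  have hd : DiffContOnCl ℂ (fun w => Kfun R m Z₁ Z₂ w φ θ ψ) (Metric.ball 0 |1|) := by
    apply DifferentiableOn.diffContOnCl
    intro w hw
    apply DifferentiableAt.differentiableWithinAt
    rw [abs_one, closure_ball _ one_ne_zero, mem_closedBall_zero_iff] at hw
    have h1 := det_ne R _ Z₁ (Umat_unitary φ θ ψ) hZ₁ w hw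
    have h2 := det_ne R _ Z₂ (Umat_unitary φ θ ψ) hZ₂ w hw
    unfold Kfun
    apply DifferentiableAt.mul_const
    refine DifferentiableAt.fun_div (by fun_prop) ?_ (mul_ne_zero h1 h2)
    simp only [Matrix.det_fin_two, Matrix.sub_apply, Matrix.smul_apply, smul_eq_mul]
    fun_prop
  have h := hd.circleAverage
  rw [← Real.circleAverage_zero_one_congr_inv, Real.circleAverage_def] at h
  have h0 : Kfun R m Z₁ Z₂ 0 φ θ ψ = (if m = 0 then 1 / (R:ℂ) ^ 4 else 0) * (Real.sin θ : ℂ) := by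
    simp only [Kfun, zero_smul, sub_zero, Matrix.det_smul, Umat_det, Fintype.card_fin]
    rcases m with _ | m
    · simp; left; ring
    · simp
  rw [h0, inv_smul_eq_iff₀ (by positivity), Complex.real_smul] at h
  rw [Complex.ofReal_mul, Complex.ofReal_ofNat] at h
  rw [← h]
  congr 1; ext α
  rw [circleMap_zero, Complex.ofReal_one, one_mul, Complex.exp_neg]

lemma Kfun_cont (R : ℝ) (m : ℕ) (Z₁ Z₂ : Matrix (Fin 2) (Fin 2) ℂ)
    (hZ₁ : (((R ^ 2 : ℝ) : ℂ) • (1 : Matrix (Fin 2) (Fin 2) ℂ)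
             - Z₁ * Z₁.conjTranspose).PosDef)
    (hZ₂ : (((R ^ 2 : ℝ) : ℂ) • (1 : Matrix (Fin 2) (Fin 2) ℂ)
             - Z₂ * Z₂.conjTranspose).PosDef) :
    Continuous fun p : ((ℝ × ℝ) × ℝ) × ℝ =>
      Kfun R m Z₁ Z₂ (Complex.exp (-(p.1.1.1 * Complex.I))) p.1.1.2 p.1.2 p.2 := by
  have hn (α : ℝ) : ‖Complex.exp (-(α * Complex.I))‖ ≤ 1 := by
    rw [← neg_mul, ← Complex.ofReal_neg, Complex.norm_exp_ofReal_mul_I]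
  unfold Kfun
  apply Continuous.mul _ (by fun_prop)
  apply Continuous.div (by fun_prop)
  · simp only [Matrix.det_fin_two, Matrix.sub_apply, Matrix.smul_apply, smul_eq_mul, Umat,
      Matrix.of_apply, Matrix.cons_val', Matrix.cons_val_zero, Matrix.cons_val_one,
      Matrix.cons_val_fin_one]
    fun_prop
  · intro p
    exact mul_ne_zero (det_ne R _ Z₁ (Umat_unitary _ _ _) hZ₁ _ (hn _))
      (det_ne R _ Z₂ (Umat_unitary _ _ _) hZ₂ _ (hn _))

/-- For `k ∈ {0,−1,−2}` and `Z₁, Z₂ ∈ 𝔻⁺_R`,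
`(i/2π³) ∫_{U(2)_R} (det W)^k/(det(W−Z₁)·det(W−Z₂)) dV` equals `1` if `k = 0` and `0` if
`k = −1` or `k = −2`. -/
theorem stmt17 (R : ℝ) (hR : 0 < R) (k : ℤ) (hk : k = 0 ∨ k = -1 ∨ k = -2)
    (Z₁ Z₂ : Matrix (Fin 2) (Fin 2) ℂ)
    (hZ₁ : (((R ^ 2 : ℝ) : ℂ) • (1 : Matrix (Fin 2) (Fin 2) ℂ)
             - Z₁ * Z₁.conjTranspose).PosDef)
    (hZ₂ : (((R ^ 2 : ℝ) : ℂ) • (1 : Matrix (Fin 2) (Fin 2) ℂ)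
             - Z₂ * Z₂.conjTranspose).PosDef) :
    (Complex.I / (2 * (Real.pi : ℂ) ^ 3)) *
      U2int R (fun W => W.det ^ k / ((W - Z₁).det * (W - Z₂).det))
    = if k = 0 then 1 else 0 := by
  obtain ⟨m, rfl⟩ : ∃ m : ℕ, k = -(m : ℤ) := by
    rcases hk with rfl | rfl | rfl
    exacts [⟨0, rfl⟩, ⟨1, rfl⟩, ⟨2, rfl⟩]
  have hR0 : (R : ℂ) ≠ 0 := by exact_mod_cast hR.ne'
  set D : ℂ := (((R : ℂ) ^ 2) ^ m)⁻¹ * ((R : ℂ) ^ 4 / (8 * Complex.I)) with hD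
  have key : ∀ α φ θ ψ : ℝ,
      (Wparam R α φ θ ψ).det ^ (-(m : ℤ)) /
        ((Wparam R α φ θ ψ - Z₁).det * (Wparam R α φ θ ψ - Z₂).det)
        * ((R : ℂ) ^ 4 / (8 * Complex.I)) * Complex.exp (4 * Complex.I * α) * (Real.sin θ : ℂ)
      = D * Kfun R m Z₁ Z₂ (Complex.exp (-(α * Complex.I))) φ θ ψ := by
    intro α φ θ ψ
    have hW : Wparam R α φ θ ψ = ((R : ℂ) * Complex.exp (Complex.I * α)) • Umat φ θ ψ := rfl
    have h4 : Complex.exp (4 * Complex.I * α) = Complex.exp (Complex.I * α) ^ 4 := by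
      rw [← Complex.exp_nat_mul]; congr 1; push_cast; ring
    have hE : Complex.exp (Complex.I * α) ≠ 0 := Complex.exp_ne_zero _
    have hw : Complex.exp (-(α * Complex.I)) = (Complex.exp (Complex.I * α))⁻¹ := by
      rw [← Complex.exp_neg]; congr 1; ring
    rw [h4, hw, hW, Kfun]
    generalize Complex.exp (Complex.I * α) = E at *
    have hdet (Z : Matrix (Fin 2) (Fin 2) ℂ) : (((R : ℂ) * E) • Umat φ θ ψ - Z).det
        = E ^ 2 * ((R : ℂ) • Umat φ θ ψ - E⁻¹ • Z).det := by
      have : ((R : ℂ) * E) • Umat φ θ ψ - Z = E • ((R : ℂ) • Umat φ θ ψ - E⁻¹ • Z) := by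
        rw [smul_sub, smul_smul, smul_smul, mul_inv_cancel₀ hE, one_smul, mul_comm]
      rw [this, Matrix.det_smul, Fintype.card_fin]
    rw [hdet, hdet, Matrix.det_smul, Umat_det, Fintype.card_fin, zpow_neg, zpow_natCast, mul_one,
      mul_pow, mul_pow, ← pow_mul E, inv_pow, hD]
    generalize ((R : ℂ) • Umat φ θ ψ - E⁻¹ • Z₁).det = A
    generalize ((R : ℂ) • Umat φ θ ψ - E⁻¹ • Z₂).det = B
    have hE4 : E ^ 4 * (E ^ 4)⁻¹ = 1 := mul_inv_cancel₀ (pow_ne_zero _ hE)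
    have hAB : E ^ 2 * A * (E ^ 2 * B) = E ^ 4 * (A * B) := by ring
    rw [hAB, div_eq_mul_inv _ (E ^ 4 * (A * B)), div_eq_mul_inv _ (A * B), mul_inv (E ^ 4),
      mul_inv ((R ^ 2 : ℂ) ^ m)]
    linear_combination (((R : ℂ) ^ 2) ^ m)⁻¹ * (E ^ (2 * m))⁻¹ * (A * B)⁻¹ *
      ((R : ℂ) ^ 4 / (8 * Complex.I)) * (Real.sin θ : ℂ) * hE4
  unfold U2int
  simp only [key]
  rw [avg (fun α φ θ ψ => D * Kfun R m Z₁ Z₂ (Complex.exp (-(α * Complex.I))) φ θ ψ)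
    (continuous_const.mul (Kfun_cont R m Z₁ Z₂ hZ₁ hZ₂)) ?_ ?_
    (fun θ => D * (2 * Real.pi * ((if m = 0 then 1 / (R:ℂ) ^ 4 else 0) * (Real.sin θ : ℂ)))) ?_]
  · simp only [intervalIntegral.integral_const_mul, intervalIntegral.integral_ofReal, integral_sin]
    rcases m with _ | m
    · have hpi : (Real.pi : ℂ) ≠ 0 := by exact_mod_cast Real.pi_ne_zero
      have hI := Complex.I_ne_zero
      simp [hD]
      field_simp
      norm_num
    · have : (-((m + 1 : ℕ) : ℤ)) ≠ 0 := by omega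
      simp [this]
      intro h
      omega
  · intro α φ θ ψ
    rw [Kfun_shift]
    congr 2
    rw [Complex.ofReal_add, add_mul, neg_add, Complex.exp_add, Complex.exp_neg (Real.pi * _),
      Complex.exp_pi_mul_I]
    norm_num
  · intro α φ θ ψ
    rw [Kfun_shift, Kfun_shift, neg_neg]
  · intro φ θ ψ
    rw [intervalIntegral.integral_const_mul, Kfun_avg R hR m Z₁ Z₂ hZ₁ hZ₂]
end
end

section
/- The family of polynomials t^l_{n m̲}(Z)·(det Z)^k, indexed by l ∈ {0, 1/2, 1, 3/2, …}, m,n ∈ {−l, −l+1, …, l}, and k ∈ {0,1,2,…}, is a ℂ-vector-space basis of the polynomial ring ℂ[z₁₁, z₁₂, z₂₁, z₂₂] (the polynomial functions on 2×2 complex matrices): these polynomials are linearly independent and span the whole ring. -/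
noncomputable section

open MvPolynomial

/-- The polynomial ring `ℂ[z₁₁, z₁₂, z₂₁, z₂₂]`, with variable `(i,j)` standing for
`z_{i+1,j+1}`. -/
abbrev PolyRing := MvPolynomial (Fin 2 × Fin 2) ℂ

/-- The matrix coefficient `t^l_{n m̲}(Z)` as a polynomial in the entries of `Z`: here
`p = 2l`, `a = l−m`, `b = l−n`, and `tpoly p a b` is the coefficient of `s^b` in
`(s z₁₁+z₂₁)^a (s z₁₂+z₂₂)^{p−a}`; it is homogeneous of degree `2l = p`. -/
def tpoly (p a b : ℕ) : PolyRing :=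
  Polynomial.coeff
    (((Polynomial.C (X (0, 0)) * Polynomial.X + Polynomial.C (X (1, 0))) ^ a *
      (Polynomial.C (X (0, 1)) * Polynomial.X + Polynomial.C (X (1, 1))) ^ (p - a) :
        Polynomial PolyRing)) b

/-- `det Z = z₁₁z₂₂ − z₁₂z₂₁` as a polynomial. -/
def detPoly : PolyRing := X (0, 0) * X (1, 1) - X (0, 1) * X (1, 0)

/-- The family `t^l_{n m̲}(Z)·(det Z)^k`, indexed by `l` (encoded `p = 2l`), `m, n ∈ {−l,…,l}`
(encoded `a = l−m`, `b = l−n`, as elements of `Fin (p+1)`), and `k ∈ ℕ`. -/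
def tfam (q : (Σ p : ℕ, Fin (p + 1) × Fin (p + 1)) × ℕ) : PolyRing :=
  tpoly q.1.1 q.1.2.1 q.1.2.2 * detPoly ^ q.2

theorem coeff_lin_pow (x z : PolyRing) (a u : ℕ) :
    ((Polynomial.C x * Polynomial.X + Polynomial.C z) ^ a : Polynomial PolyRing).coeff u
      = x ^ u * z ^ (a - u) * (a.choose u : PolyRing) := by
  rw [add_pow, Polynomial.finsetSum_coeff]
  have h : ∀ m ∈ Finset.range (a + 1),
      ((Polynomial.C x * Polynomial.X) ^ m * Polynomial.C z ^ (a - m) *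
        ((a.choose m : ℕ) : Polynomial PolyRing)).coeff u
      = if u = m then x ^ u * z ^ (a - u) * (a.choose u : PolyRing) else 0 := by
    intro m _
    have : ((Polynomial.C x * Polynomial.X) ^ m * Polynomial.C z ^ (a - m) *
        ((a.choose m : ℕ) : Polynomial PolyRing))
        = Polynomial.C (x ^ m * z ^ (a - m) * (a.choose m : PolyRing)) * Polynomial.X ^ m := by
      simp only [map_mul, map_pow, map_natCast]
      ring
    rw [this, Polynomial.coeff_C_mul_X_pow]
    split_ifs with h
    · subst h; rfl
    · rfl
  rw [Finset.sum_congr rfl h, Finset.sum_ite_eq]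
  split_ifs with h
  · rfl
  · have : a < u := by simpa using h
    simp [Nat.choose_eq_zero_of_lt this]

theorem tpoly_eq (p a b : ℕ) : tpoly p a b = ∑ w ∈ Finset.HasAntidiagonal.antidiagonal b,
    (X (0, 0) ^ w.1 * X (1, 0) ^ (a - w.1) * (a.choose w.1 : PolyRing)) *
    (X (0, 1) ^ w.2 * X (1, 1) ^ (p - a - w.2) * ((p - a).choose w.2 : PolyRing)) := by
  unfold tpoly
  rw [Polynomial.coeff_mul]
  simp only [coeff_lin_pow]

theorem mon_congr_aux {Q : Type*} [CommRing Q] (x y z w : Q) (h : x * w = y * z)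
    (i j k l i' j' k' l' : ℕ) (h1 : i + j = i' + j') (h2 : i + k = i' + k')
    (h3 : j + l = j' + l') (hi : i ≤ i') :
    x ^ i * y ^ j * z ^ k * w ^ l = x ^ i' * y ^ j' * z ^ k' * w ^ l' := by
  obtain ⟨d, rfl⟩ := Nat.exists_eq_add_of_le hi
  obtain rfl : j = j' + d := by omega
  obtain rfl : k = k' + d := by omega
  obtain rfl : l' = l + d := by omega
  have : x ^ d * w ^ d = y ^ d * z ^ d := by rw [← mul_pow, h, mul_pow]
  simp only [pow_add]
  linear_combination (- x ^ i * y ^ j' * z ^ k' * w ^ l) * this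

theorem mon_congr {Q : Type*} [CommRing Q] (x y z w : Q) (h : x * w = y * z)
    (i j k l i' j' k' l' : ℕ) (h1 : i + j = i' + j') (h2 : i + k = i' + k')
    (h3 : j + l = j' + l') :
    x ^ i * y ^ j * z ^ k * w ^ l = x ^ i' * y ^ j' * z ^ k' * w ^ l' := by
  rcases le_total i i' with hi | hi
  · exact mon_congr_aux x y z w h i j k l i' j' k' l' h1 h2 h3 hi
  · exact (mon_congr_aux x y z w h i' j' k' l' i j k l h1.symm h2.symm h3.symm hi).symm

theorem tpoly_map {Q : Type*} [CommRing Q] (g : PolyRing →+* Q) (hg : g detPoly = 0)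
    (i j k l p a b : ℕ) (hp : p = i + j + k + l) (ha : a = i + k) (hb : b = i + j) :
    g (tpoly p a b) = (p.choose b : Q) *
      (g (X (0, 0)) ^ i * g (X (0, 1)) ^ j * g (X (1, 0)) ^ k * g (X (1, 1)) ^ l) := by
  have hd : g (X (0, 0)) * g (X (1, 1)) = g (X (0, 1)) * g (X (1, 0)) := by
    have := hg
    simp only [detPoly, map_sub, map_mul] at this
    exact sub_eq_zero.mp this
  have hch : p.choose b = ∑ w ∈ Finset.HasAntidiagonal.antidiagonal b, a.choose w.1 * (p - a).choose w.2 := by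
    rw [← Nat.add_choose_eq]
    congr 1
    omega
  rw [tpoly_eq, hch, map_sum, Nat.cast_sum, Finset.sum_mul]
  refine Finset.sum_congr rfl ?_
  rintro ⟨u, v⟩ huv
  have huv' : u + v = b := by simpa using huv
  simp only [map_mul, map_pow, map_natCast, Nat.cast_mul]
  by_cases h1 : a < u
  · simp [Nat.choose_eq_zero_of_lt h1]
  by_cases h2 : p - a < v
  · simp [Nat.choose_eq_zero_of_lt h2]
  rw [← mon_congr _ _ _ _ hd u v (a - u) (p - a - v) i j k l (by omega) (by omega) (by omega)]
  ring

theorem totalDegree_tpoly (p a b : ℕ) (ha : a ≤ p) : (tpoly p a b).totalDegree ≤ p := by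
  rw [tpoly_eq]
  refine totalDegree_finsetSum_le ?_
  rintro ⟨u, v⟩ huv
  simp only
  by_cases h1 : a < u
  · simp [Nat.choose_eq_zero_of_lt h1]
  by_cases h2 : p - a < v
  · simp [Nat.choose_eq_zero_of_lt h2]
  have hX : ∀ (s : Fin 2 × Fin 2) (n : ℕ), (X s ^ n : PolyRing).totalDegree ≤ n := by
    intro s n
    simp
  have hN : ∀ n : ℕ, ((n : PolyRing)).totalDegree = 0 := by
    intro n
    rw [← map_natCast (C : ℂ →+* PolyRing), totalDegree_C]
  have e1 := totalDegree_mul (X (0, 0) ^ u * X (1, 0) ^ (a - u) * (a.choose u : PolyRing))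
    (X (0, 1) ^ v * X (1, 1) ^ (p - a - v) * ((p - a).choose v : PolyRing))
  have e2 := totalDegree_mul (X (0, 0) ^ u * X (1, 0) ^ (a - u)) (a.choose u : PolyRing)
  have e3 := totalDegree_mul (X (0, 1) ^ v * X (1, 1) ^ (p - a - v)) ((p - a).choose v : PolyRing)
  have e4 := totalDegree_mul (X (0, 0) ^ u) (X (1, 0) ^ (a - u) : PolyRing)
  have e5 := totalDegree_mul (X (0, 1) ^ v) (X (1, 1) ^ (p - a - v) : PolyRing)
  have f1 := hX (0, 0) u
  have f2 := hX (1, 0) (a - u)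
  have f3 := hX (0, 1) v
  have f4 := hX (1, 1) (p - a - v)
  rw [hN] at e2 e3
  omega

theorem detPoly_deg_pos : 0 < detPoly.totalDegree := by
  rw [Nat.pos_iff_ne_zero]
  intro h
  rw [totalDegree_eq_zero_iff_eq_C] at h
  have h0 := congrArg (eval (fun _ => (0 : ℂ))) h
  have h1 := congrArg (eval (fun s : Fin 2 × Fin 2 => if s.1 = s.2 then (1 : ℂ) else 0)) h
  rw [eval_C] at h0 h1
  rw [← h0] at h1
  simp [detPoly] at h1

theorem detPoly_ne : detPoly ≠ 0 := by
  intro h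
  have := detPoly_deg_pos
  simp [h] at this

theorem span_mul_det (f : PolyRing) (hf : f ∈ Submodule.span ℂ (Set.range tfam)) :
    detPoly * f ∈ Submodule.span ℂ (Set.range tfam) := by
  induction hf using Submodule.span_induction with
  | mem x hx =>
    obtain ⟨⟨q, k⟩, rfl⟩ := hx
    apply Submodule.subset_span
    refine ⟨(q, k + 1), ?_⟩
    simp only [tfam]
    ring
  | zero => simp
  | add x y _ _ hx hy => rw [mul_add]; exact Submodule.add_mem _ hx hy
  | smul c x _ hx => rw [mul_smul_comm]; exact Submodule.smul_mem _ c hx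

theorem monomial_four (e : Fin 2 × Fin 2 →₀ ℕ) : (monomial e (1 : ℂ) : PolyRing) =
    X (0, 0) ^ e (0, 0) * X (0, 1) ^ e (0, 1) * X (1, 0) ^ e (1, 0) * X (1, 1) ^ e (1, 1) := by
  rw [monomial_eq, Finsupp.prod_fintype _ _ (by simp), Fintype.prod_prod_type]
  simp [Fin.prod_univ_two, mul_assoc]

theorem mem_span_aux (n : ℕ) : ∀ f : PolyRing, f.totalDegree ≤ n →
    f ∈ Submodule.span ℂ (Set.range tfam) := by
  induction n using Nat.strong_induction_on with
  | _ n ih =>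
  intro f hf
  rw [f.as_sum]
  refine Submodule.sum_mem _ fun e he => ?_
  have hdeg : e (0, 0) + e (0, 1) + e (1, 0) + e (1, 1) ≤ n := by
    have := (le_totalDegree he).trans hf
    rw [Finsupp.sum_fintype _ _ (by simp), Fintype.sum_prod_type] at this
    simp only [Fin.sum_univ_two] at this
    omega
  have hm : (monomial e (coeff e f) : PolyRing) = coeff e f • monomial e 1 := by
    rw [smul_monomial, smul_eq_mul, mul_one]
  rw [hm]
  apply Submodule.smul_mem
  set p := e (0, 0) + e (0, 1) + e (1, 0) + e (1, 1) with hp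
  set a := e (0, 0) + e (1, 0) with ha
  set b := e (0, 0) + e (0, 1) with hb
  have hq := tpoly_map (Ideal.Quotient.mk (Ideal.span {detPoly}))
    (Ideal.Quotient.eq_zero_iff_mem.mpr (Ideal.mem_span_singleton_self _))
    (e (0, 0)) (e (0, 1)) (e (1, 0)) (e (1, 1)) p a b hp ha hb
  have hc : (p.choose b : ℂ) ≠ 0 := by
    have : 0 < p.choose b := Nat.choose_pos (by omega)
    exact_mod_cast this.ne'
  simp only [← map_pow, ← map_mul] at hq
  rw [← monomial_four, ← map_natCast (Ideal.Quotient.mk (Ideal.span {detPoly})), ← map_mul,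
    Ideal.Quotient.eq, Ideal.mem_span_singleton] at hq
  obtain ⟨g, hg⟩ := hq
  have ht : tpoly p a b ∈ Submodule.span ℂ (Set.range tfam) := by
    apply Submodule.subset_span
    refine ⟨(⟨p, (⟨a, by omega⟩, ⟨b, by omega⟩)⟩, 0), ?_⟩
    simp [tfam]
  have hgm : detPoly * g ∈ Submodule.span ℂ (Set.range tfam) := by
    by_cases hg0 : g = 0
    · simp [hg0]
    apply span_mul_det
    have h1 := totalDegree_mul_of_isDomain detPoly_ne hg0
    have h2 := detPoly_deg_pos
    have h3 : (detPoly * g).totalDegree ≤ p := by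
      rw [← hg]
      refine (totalDegree_sub _ _).trans (max_le (totalDegree_tpoly p a b (by omega)) ?_)
      refine (totalDegree_mul _ _).trans ?_
      rw [← map_natCast (C : ℂ →+* PolyRing), totalDegree_C, zero_add,
        totalDegree_monomial _ one_ne_zero, Finsupp.sum_fintype _ _ (by simp),
        Fintype.sum_prod_type]
      simp only [Fin.sum_univ_two]
      omega
    exact ih g.totalDegree (by omega) g le_rfl
  have hfin : (monomial e (1 : ℂ) : PolyRing)
      = (p.choose b : ℂ)⁻¹ • (tpoly p a b - detPoly * g) := by
    rw [← hg, sub_sub_cancel, ← map_natCast (C : ℂ →+* PolyRing), ← smul_eq_C_mul, smul_smul,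
      inv_mul_cancel₀ hc, one_smul]
  rw [hfin]
  exact Submodule.smul_mem _ _ (Submodule.sub_mem _ ht hgm)

/-- The substitution `z_ij = x_i y_j`. -/
def segre : PolyRing →ₐ[ℂ] PolyRing := aeval fun s => X (0, s.1) * X (1, s.2)

/-- The exponent of the image of `tpoly p a b`. -/
def expo (q : Σ p : ℕ, Fin (p + 1) × Fin (p + 1)) : Fin 2 × Fin 2 →₀ ℕ :=
  Finsupp.equivFunOnFinite.symm fun s =>
    if s = (0, 0) then (q.2.2 : ℕ) else if s = (0, 1) then q.1 - q.2.2
    else if s = (1, 0) then (q.2.1 : ℕ) else q.1 - q.2.1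

theorem expo_inj : Function.Injective expo := by
  rintro ⟨p, a, b⟩ ⟨p', a', b'⟩ h
  have h1 := DFunLike.congr_fun h (0, 0)
  have h2 := DFunLike.congr_fun h (0, 1)
  have h3 := DFunLike.congr_fun h (1, 0)
  simp [expo] at h1 h2 h3
  have := b.2
  have := b'.2
  obtain rfl : p = p' := by omega
  obtain rfl : a = a' := Fin.ext h3
  obtain rfl : b = b' := Fin.ext h1
  rfl

theorem segre_det : segre detPoly = 0 := by
  simp [segre, detPoly]
  ring

theorem segre_mon (p a b : ℕ) (ha : a ≤ p) (hb : b ≤ p) :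
    segre (tpoly p a b) = (p.choose b : PolyRing) *
      (X (0, 0) ^ b * X (0, 1) ^ (p - b) * X (1, 0) ^ a * X (1, 1) ^ (p - a)) := by
  have hX : ∀ s, segre (X s) = X (0, s.1) * X (1, s.2) := by
    intro s
    simp [segre]
  rcases le_total a b with hab | hab
  · obtain ⟨d, rfl⟩ := Nat.exists_eq_add_of_le hab
    obtain ⟨c, rfl⟩ := Nat.exists_eq_add_of_le hb
    have h := tpoly_map (segre : PolyRing →+* PolyRing) segre_det
      a d 0 c (a + d + c) a (a + d) (by omega) (by omega) (by omega)
    rw [RingHom.coe_coe] at h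
    rw [h]
    clear h
    have e2 : a + d + c - (a + d) = c := by omega
    have e3 : a + d + c - a = d + c := by omega
    simp only [hX]
    rw [e2, e3]
    generalize ((Nat.choose _ _ : ℕ) : PolyRing) = N
    generalize (X (0, 0) : PolyRing) = x
    generalize (X (0, 1) : PolyRing) = y
    generalize (X (1, 0) : PolyRing) = z
    generalize (X (1, 1) : PolyRing) = w
    ring
  · obtain ⟨d, rfl⟩ := Nat.exists_eq_add_of_le hab
    obtain ⟨c, rfl⟩ := Nat.exists_eq_add_of_le ha
    have h := tpoly_map (segre : PolyRing →+* PolyRing) segre_det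
      b 0 d c (b + d + c) (b + d) b (by omega) (by omega) (by omega)
    rw [RingHom.coe_coe] at h
    rw [h]
    clear h
    have e2 : b + d + c - (b + d) = c := by omega
    have e3 : b + d + c - b = d + c := by omega
    simp only [hX]
    rw [e2, e3]
    generalize ((Nat.choose _ _ : ℕ) : PolyRing) = N
    generalize (X (0, 0) : PolyRing) = x
    generalize (X (0, 1) : PolyRing) = y
    generalize (X (1, 0) : PolyRing) = z
    generalize (X (1, 1) : PolyRing) = w
    ring

theorem segre_tpoly (q : Σ p : ℕ, Fin (p + 1) × Fin (p + 1)) :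
    segre (tpoly q.1 q.2.1 q.2.2) = monomial (expo q) (q.1.choose q.2.2 : ℂ) := by
  have hm : (monomial (expo q) (q.1.choose q.2.2 : ℂ) : PolyRing)
      = C (q.1.choose q.2.2 : ℂ) * monomial (expo q) 1 := by
    rw [C_mul_monomial, mul_one]
  rw [hm, monomial_four, map_natCast,
    segre_mon _ _ _ (Nat.lt_succ_iff.mp q.2.1.2) (Nat.lt_succ_iff.mp q.2.2.2)]
  simp [expo]

theorem tfam_indep : LinearIndependent ℂ tfam := by
  rw [linearIndependent_iff]
  intro l hl
  have key : ∀ k q, l (q, k) = 0 := by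
    intro k
    induction k using Nat.strong_induction_on with
    | _ k ih =>
    intro q
    rw [Finsupp.linearCombination_apply, Finsupp.sum] at hl
    have h1 : ∑ r ∈ l.support, l r • tfam r = detPoly ^ k *
        ∑ r ∈ l.support, l r • (tpoly r.1.1 r.1.2.1 r.1.2.2 * detPoly ^ (r.2 - k)) := by
      rw [Finset.mul_sum]
      refine Finset.sum_congr rfl ?_
      rintro ⟨q', k'⟩ hr
      have hk : k ≤ k' := by
        by_contra hlt
        exact (Finsupp.mem_support_iff.mp hr) (ih k' (by omega) q')
      obtain ⟨d, rfl⟩ := Nat.exists_eq_add_of_le hk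
      rw [mul_smul_comm]
      simp only [tfam, Nat.add_sub_cancel_left, pow_add]
      congr 1
      ring
    rw [h1] at hl
    have h2 := (mul_eq_zero.mp hl).resolve_left (pow_ne_zero _ detPoly_ne)
    have h3 := congrArg (fun f => coeff (expo q) (segre f)) h2
    simp only [map_sum, map_smul, map_mul, map_pow, segre_det, segre_tpoly, map_zero, coeff_zero,
      coeff_sum, coeff_smul] at h3
    by_contra hne
    rw [Finset.sum_eq_single (q, k)] at h3
    · simp only [Nat.sub_self, pow_zero, mul_one, coeff_monomial, if_true, smul_eq_mul] at h3
      have hc : (q.1.choose q.2.2 : ℂ) ≠ 0 := by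
        have : 0 < q.1.choose q.2.2 := Nat.choose_pos (by have := q.2.2.2; omega)
        exact_mod_cast this.ne'
      exact (mul_ne_zero hne hc) h3
    · rintro ⟨q', k'⟩ hr hrne
      by_cases hlt : k' < k
      · rw [ih k' hlt q', zero_smul]
      by_cases hk : k' = k
      · subst hk
        have hq : expo q' ≠ expo q := by
          intro hh
          exact hrne (by rw [expo_inj hh])
        simp [coeff_monomial, hq]
      · have : k' - k ≠ 0 := by omega
        simp [zero_pow this]
    · intro hns
      exact absurd (Finsupp.mem_support_iff.mpr hne) hns
  ext ⟨q, k⟩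
  exact key k q

/-- The polynomials `t^l_{n m̲}(Z)·(det Z)^k` for `l ∈ {0,1/2,1,…}`, `m,n ∈ {−l,…,l}`,
`k ∈ {0,1,2,…}` form a `ℂ`-vector-space basis of `ℂ[z₁₁, z₁₂, z₂₁, z₂₂]`: they are linearly
independent and span the whole ring. -/
theorem stmt18 :
    LinearIndependent ℂ tfam ∧ Submodule.span ℂ (Set.range tfam) = ⊤ :=
  ⟨tfam_indep, by
    rw [eq_top_iff]
    intro f _
    exact mem_span_aux f.totalDegree f le_rfl⟩
end
end
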